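/- Under the feature and core-state assumptions, for any nonnegative vector μ ∈ ℝ_+^S, the value of the linearly relaxed approximate linear program satisfies |V_LRALP(μ) − μᵀv*| ≤ 10‖μ‖₁·ε_approx/(1−γ). -/

import Mathlib

open scoped BigOperators

namespace MDPPlan

variable {S A : Type} [Fintype S] [Fintype A] [DecidableEq S] {d m : ℕ}

/-- `φ_sᵀθ`: dot product of the feature vector of state `s` with weights `θ`. -/
noncomputable def phiDot (Φ : S → Fin d → ℝ) (θ : Fin d → ℝ) (s : S) : ℝ :=
  ∑ j, Φ s j * θ j

/-- The sequence `𝒮₊ = (s₀, s₁, …, s_m)`: `none` is the planning state `s₀`,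
`some i` is the `i`-th core state. -/
def splus (s₀ : S) (c : Fin m → S) : Option (Fin m) → S := fun o => o.elim s₀ c

/-- State-transition matrix `P_π` of a stationary policy `π`. -/
noncomputable def Ppi (P : S → A → S → ℝ) (π : S → A → ℝ) : Matrix S S ℝ :=
  Matrix.of fun s s' => ∑ a, π s a * P s a s'

/-- Expected reward `r_π` of a stationary policy `π`. -/
noncomputable def rpi (r : S → A → ℝ) (π : S → A → ℝ) : S → ℝ :=
  fun s => ∑ a, π s a * r s a

/-- `π` is a stationary policy: each `π(·|s)` is a probability distribution over actions. -/
def IsPolicy (π : S → A → ℝ) : Prop := (∀ s a, 0 ≤ π s a) ∧ ∀ s, ∑ a, π s a = 1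

/-- Value function `v_π = Σ_{t≥0} (γ P_π)^t r_π`. -/
noncomputable def vpi (γ : ℝ) (P : S → A → S → ℝ) (r : S → A → ℝ) (π : S → A → ℝ) :
    S → ℝ :=
  ∑' t : ℕ, ((γ • Ppi P π) ^ t).mulVec (rpi r π)

/-- Optimal value function `v*(s) = sup_π v_π(s)`. -/
noncomputable def vstar (γ : ℝ) (P : S → A → S → ℝ) (r : S → A → ℝ) : S → ℝ :=
  fun s => ⨆ π : {π : S → A → ℝ // IsPolicy π}, vpi γ P r π.1 s

/-- Optimal action-value function `q*(s,a) = r_{sa} + γ P_{sa} v*`. -/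
noncomputable def qstar (γ : ℝ) (P : S → A → S → ℝ) (r : S → A → ℝ) (s : S) (a : A) : ℝ :=
  r s a + γ * ∑ s', P s a s' * vstar γ P r s'

/-- `ε_approx = inf_θ max_s |v*(s) − φ_sᵀθ|`. -/
noncomputable def epsApprox (Φ : S → Fin d → ℝ) (v : S → ℝ) : ℝ :=
  ⨅ θ : Fin d → ℝ, ⨆ s : S, |v s - phiDot Φ θ s|

/-- Membership in `Λ`: nonnegative and the `s₀`-block sums to one. -/
def InLambda (lam : Option (Fin m) × A → ℝ) : Prop :=
  (∀ p, 0 ≤ lam p) ∧ ∑ a, lam (none, a) = 1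

/-- The CoreLP equality constraint `φ_{s₀}ᵀ + λᵀW(γP − E)Φ = 0ᵀ`. -/
def CoreLPConstraint (γ : ℝ) (P : S → A → S → ℝ) (Φ : S → Fin d → ℝ) (s₀ : S)
    (c : Fin m → S) (lam : Option (Fin m) × A → ℝ) : Prop :=
  ∀ j : Fin d, Φ s₀ j + ∑ p : Option (Fin m) × A,
    lam p * (γ * (∑ s', P (splus s₀ c p.1) p.2 s' * Φ s' j) - Φ (splus s₀ c p.1) j) = 0

/-- The CoreLP objective `λᵀWr`. -/
noncomputable def CoreLPObj (r : S → A → ℝ) (s₀ : S) (c : Fin m → S)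
    (lam : Option (Fin m) × A → ℝ) : ℝ :=
  ∑ p : Option (Fin m) × A, lam p * r (splus s₀ c p.1) p.2

/-- The optimal value `V†` of CoreLP. -/
noncomputable def Vdagger (γ : ℝ) (P : S → A → S → ℝ) (r : S → A → ℝ)
    (Φ : S → Fin d → ℝ) (s₀ : S) (c : Fin m → S) : ℝ :=
  sSup {x : ℝ | ∃ lam : Option (Fin m) × A → ℝ,
    InLambda lam ∧ CoreLPConstraint γ P Φ s₀ c lam ∧ x = CoreLPObj r s₀ c lam}

/-- Feasibility for LRALP: `W*r + W*(γP − E)Φθ ≤ 0`. -/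
def LRALPFeasible (γ : ℝ) (P : S → A → S → ℝ) (r : S → A → ℝ) (Φ : S → Fin d → ℝ)
    (c : Fin m → S) (θ : Fin d → ℝ) : Prop :=
  ∀ (i : Fin m) (a : A),
    r (c i) a + (γ * (∑ s', P (c i) a s' * phiDot Φ θ s') - phiDot Φ θ (c i)) ≤ 0

/-- `V_LRALP(μ) = min { μᵀΦθ : θ feasible for LRALP }`. -/
noncomputable def VLRALP (γ : ℝ) (P : S → A → S → ℝ) (r : S → A → ℝ) (Φ : S → Fin d → ℝ)
    (c : Fin m → S) (μ : S → ℝ) : ℝ :=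
  sInf {x : ℝ | ∃ θ : Fin d → ℝ, LRALPFeasible γ P r Φ c θ ∧ x = ∑ s, μ s * phiDot Φ θ s}

/-- The Saddle CoreLP objective `f(λ,θ) = λᵀWr + φ_{s₀}ᵀθ + λᵀW(γP − E)Φθ`. -/
noncomputable def fObj (γ : ℝ) (P : S → A → S → ℝ) (r : S → A → ℝ) (Φ : S → Fin d → ℝ)
    (s₀ : S) (c : Fin m → S) (lam : Option (Fin m) × A → ℝ) (θ : Fin d → ℝ) : ℝ :=
  CoreLPObj r s₀ c lam + phiDot Φ θ s₀ +
    ∑ p : Option (Fin m) × A,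
      lam p * (γ * (∑ s', P (splus s₀ c p.1) p.2 s' * phiDot Φ θ s') -
        phiDot Φ θ (splus s₀ c p.1))

/-- The Saddle LRALP objective `g_μ(λ*,θ) = λ*ᵀW*r + μᵀΦθ + λ*ᵀW*(γP − E)Φθ`. -/
noncomputable def gObj (γ : ℝ) (P : S → A → S → ℝ) (r : S → A → ℝ) (Φ : S → Fin d → ℝ)
    (c : Fin m → S) (μ : S → ℝ) (lamS : Fin m × A → ℝ) (θ : Fin d → ℝ) : ℝ :=
  (∑ p : Fin m × A, lamS p * r (c p.1) p.2) + (∑ s, μ s * phiDot Φ θ s) +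
    ∑ p : Fin m × A,
      lamS p * (γ * (∑ s', P (c p.1) p.2 s' * phiDot Φ θ s') - phiDot Φ θ (c p.1))

/-- The `𝓑`-bounded duality gap `δ_𝓑(λ̂,θ̂) = max_{λ∈Λ_γ} f(λ,θ̂) − inf_{θ∈𝓑} f(λ̂,θ)`. -/
noncomputable def dualityGap (γ : ℝ) (P : S → A → S → ℝ) (r : S → A → ℝ)
    (Φ : S → Fin d → ℝ) (s₀ : S) (c : Fin m → S) (Bset : Set (Fin d → ℝ))
    (lamHat : Option (Fin m) × A → ℝ) (θHat : Fin d → ℝ) : ℝ :=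
  sSup {x : ℝ | ∃ lam : Option (Fin m) × A → ℝ,
      InLambda lam ∧ (∑ p, |lam p|) = 1 / (1 - γ) ∧ x = fObj γ P r Φ s₀ c lam θHat} -
    sInf {x : ℝ | ∃ θ ∈ Bset, x = fObj γ P r Φ s₀ c lamHat θ}


/-- maximum principle -/
theorem aux_contr {S : Type} [Fintype S] [Nonempty S] {γ : ℝ} (hγ1 : γ < 1) (x : S → ℝ)
    (h : ∀ s M, (∀ t, x t ≤ M) → x s ≤ γ * M) (s : S) : x s ≤ 0 := by
  obtain ⟨t, ht⟩ := Finite.exists_max x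
  have h1 := h t (x t) ht
  have h2 := ht s
  nlinarith

theorem avg_le {S : Type} [Fintype S] (p : S → ℝ) (h0 : ∀ s, 0 ≤ p s) (h1 : ∑ s, p s = 1)
    (x : S → ℝ) (M : ℝ) (h : ∀ t, x t ≤ M) : ∑ s, p s * x s ≤ M := by
  calc ∑ s, p s * x s ≤ ∑ s, p s * M :=
        Finset.sum_le_sum fun s _ => mul_le_mul_of_nonneg_left (h s) (h0 s)
    _ = M := by rw [← Finset.sum_mul, h1, one_mul]

theorem le_avg {S : Type} [Fintype S] (p : S → ℝ) (h0 : ∀ s, 0 ≤ p s) (h1 : ∑ s, p s = 1)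
    (x : S → ℝ) (M : ℝ) (h : ∀ t, M ≤ x t) : M ≤ ∑ s, p s * x s := by
  calc M = ∑ s, p s * M := by rw [← Finset.sum_mul, h1, one_mul]
    _ ≤ ∑ s, p s * x s :=
        Finset.sum_le_sum fun s _ => mul_le_mul_of_nonneg_left (h s) (h0 s)

theorem Ppi_mulVec {S A : Type} [Fintype S] [Fintype A]
    (P : S → A → S → ℝ) (π : S → A → ℝ) (v : S → ℝ) (s : S) :
    (Ppi P π).mulVec v s = ∑ a, π s a * ∑ s', P s a s' * v s' := by
  simp only [Matrix.mulVec, dotProduct, Ppi, Matrix.of_apply, Finset.sum_mul, Finset.mul_sum]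
  rw [Finset.sum_comm]
  simp only [mul_assoc]

theorem vpi_fix {S A : Type} [Fintype S] [Fintype A] [DecidableEq S]
    (γ : ℝ) (hγ0 : 0 ≤ γ) (hγ1 : γ < 1)
    (P : S → A → S → ℝ) (hP0 : ∀ s a s', 0 ≤ P s a s')
    (hP1 : ∀ s a, ∑ s', P s a s' = 1)
    (r : S → A → ℝ) (π : S → A → ℝ) (hπ : IsPolicy π) (s : S) :
    vpi γ P r π s = ∑ a, π s a * (r s a + γ * ∑ s', P s a s' * vpi γ P r π s') := by
  have hb : ∀ v : S → ℝ, ‖(γ • Ppi P π).mulVec v‖ ≤ γ * ‖v‖ := by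
    intro v
    refine (pi_norm_le_iff_of_nonneg (by positivity)).2 fun s => ?_
    have hv : ∀ t, |v t| ≤ ‖v‖ := fun t => norm_le_pi_norm v t
    rw [Matrix.smul_mulVec, Pi.smul_apply, smul_eq_mul, Real.norm_eq_abs, abs_mul,
      abs_of_nonneg hγ0, Ppi_mulVec]
    refine mul_le_mul_of_nonneg_left (abs_le.2 ⟨?_, ?_⟩) hγ0
    · exact le_avg _ (hπ.1 s) (hπ.2 s) _ _ fun a => le_avg _ (hP0 s a) (hP1 s a) _ _
        fun t => (abs_le.1 (hv t)).1
    · exact avg_le _ (hπ.1 s) (hπ.2 s) _ _ fun a => avg_le _ (hP0 s a) (hP1 s a) _ _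
        fun t => (abs_le.1 (hv t)).2
  have hstep : ∀ t : ℕ, ((γ • Ppi P π) ^ (t+1)).mulVec (rpi r π)
      = (γ • Ppi P π).mulVec (((γ • Ppi P π) ^ t).mulVec (rpi r π)) := by
    intro t
    rw [Matrix.mulVec_mulVec, pow_succ']
  have hn : ∀ t : ℕ, ‖((γ • Ppi P π) ^ t).mulVec (rpi r π)‖ ≤ γ ^ t * ‖rpi r π‖ := by
    intro t
    induction t with
    | zero => simp
    | succ t ih =>
      rw [hstep, pow_succ', mul_assoc]
      exact (hb _).trans (mul_le_mul_of_nonneg_left ih hγ0)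
  have hs : Summable fun t : ℕ => ((γ • Ppi P π) ^ t).mulVec (rpi r π) :=
    Summable.of_norm_bounded ((summable_geometric_of_lt_one hγ0 hγ1).mul_right _) hn
  have key : vpi γ P r π = rpi r π + (γ • Ppi P π).mulVec (vpi γ P r π) := by
    have h1 := hs.tsum_eq_zero_add
    have h2 := (Matrix.mulVecLin (γ • Ppi P π)).toContinuousLinearMap.map_tsum hs
    simp only [hstep] at h1
    simp only [LinearMap.coe_toContinuousLinearMap', Matrix.mulVecLin_apply] at h2
    rw [← h2] at h1
    simpa [vpi] using h1
  have := congrFun key s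
  rw [this, Pi.add_apply, Matrix.smul_mulVec, Pi.smul_apply, smul_eq_mul, Ppi_mulVec, rpi,
    Finset.mul_sum, ← Finset.sum_add_distrib]
  refine Finset.sum_congr rfl fun a _ => ?_
  ring

theorem exists_bellman {S A : Type} [Fintype S] [Fintype A] [Nonempty S] [Nonempty A]
    (γ : ℝ) (hγ0 : 0 ≤ γ) (hγ1 : γ < 1)
    (P : S → A → S → ℝ) (hP0 : ∀ s a s', 0 ≤ P s a s')
    (hP1 : ∀ s a, ∑ s', P s a s' = 1) (r : S → A → ℝ) :
    ∃ V : S → ℝ, (∀ s a, r s a + γ * ∑ s', P s a s' * V s' ≤ V s) ∧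
      ∀ s, ∃ a, V s = r s a + γ * ∑ s', P s a s' * V s' := by
  let T : (S → ℝ) → S → ℝ := fun v s => ⨆ a, (r s a + γ * ∑ s', P s a s' * v s')
  have hle : ∀ v s a, r s a + γ * ∑ s', P s a s' * v s' ≤ T v s := fun v s a =>
    le_ciSup (f := fun a => r s a + γ * ∑ s', P s a s' * v s') (Set.finite_range _).bddAbove a
  have hsub : ∀ v w s, T v s ≤ T w s + γ * dist v w := by
    intro v w s
    refine ciSup_le fun a => ?_
    have h1 := hle w s a
    have h2 : ∑ s', P s a s' * (v s' - w s') ≤ dist v w :=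
      avg_le _ (hP0 s a) (hP1 s a) _ _ fun t =>
        (le_abs_self _).trans (by simpa [Real.dist_eq] using dist_le_pi_dist v w t)
    simp only [mul_sub, Finset.sum_sub_distrib] at h2
    nlinarith [mul_le_mul_of_nonneg_left h2 hγ0]
  have hT : ContractingWith ⟨γ, hγ0⟩ T := by
    refine ⟨by exact_mod_cast hγ1, LipschitzWith.of_dist_le_mul fun v w => ?_⟩
    refine (dist_pi_le_iff (by positivity)).2 fun s => ?_
    rw [Real.dist_eq, abs_le]
    have h1 := hsub v w s
    have h2 := hsub w v s
    rw [dist_comm w v] at h2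
    constructor
    · show -(γ * _) ≤ _
      linarith
    · show _ ≤ γ * _
      linarith
  have hfix : T hT.fixedPoint = hT.fixedPoint := hT.fixedPoint_isFixedPt
  refine ⟨hT.fixedPoint, fun s a => ?_, fun s => ?_⟩
  · exact (hle _ s a).trans (congrFun hfix s).le
  · obtain ⟨a, ha⟩ := exists_eq_ciSup_of_finite
      (f := fun a => r s a + γ * ∑ s', P s a s' * ContractingWith.fixedPoint T hT s')
    exact ⟨a, ((congrFun hfix s).symm.trans ha.symm)⟩

theorem vstar_bellman {S A : Type} [Fintype S] [Fintype A] [DecidableEq S]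
    [Nonempty S] [Nonempty A]
    (γ : ℝ) (hγ0 : 0 ≤ γ) (hγ1 : γ < 1)
    (P : S → A → S → ℝ) (hP0 : ∀ s a s', 0 ≤ P s a s')
    (hP1 : ∀ s a, ∑ s', P s a s' = 1) (r : S → A → ℝ) :
    (∀ s a, r s a + γ * ∑ s', P s a s' * vstar γ P r s' ≤ vstar γ P r s) ∧
      ∀ s, ∃ a, vstar γ P r s = r s a + γ * ∑ s', P s a s' * vstar γ P r s' := by
  classical
  obtain ⟨V, hV1, hV2⟩ := exists_bellman γ hγ0 hγ1 P hP0 hP1 r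
  suffices h : vstar γ P r = V by rw [h]; exact ⟨hV1, hV2⟩
  have hub : ∀ π, IsPolicy π → ∀ s, vpi γ P r π s ≤ V s := by
    intro π hπ s
    have := aux_contr hγ1 (fun s => vpi γ P r π s - V s) ?_ s
    · linarith
    intro s M hM
    have h1 := vpi_fix γ hγ0 hγ1 P hP0 hP1 r π hπ s
    have h2 : ∑ a, π s a * (r s a + γ * ∑ s', P s a s' * vpi γ P r π s') ≤ V s + γ * M := by
      refine avg_le _ (hπ.1 s) (hπ.2 s) _ _ fun a => ?_
      have h3 := avg_le _ (hP0 s a) (hP1 s a) _ _ hM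
      have h4 := hV1 s a
      simp only [mul_sub, Finset.sum_sub_distrib] at h3
      nlinarith [mul_le_mul_of_nonneg_left h3 hγ0]
    show vpi γ P r π s - V s ≤ γ * M
    linarith
  choose g hg using hV2
  let π : S → A → ℝ := fun s a => if a = g s then 1 else 0
  have hπ : IsPolicy π := ⟨fun s a => by dsimp only [π]; split_ifs <;> norm_num,
    fun s => by simp [π]⟩
  have hlb : ∀ s, V s ≤ vpi γ P r π s := by
    intro s
    have := aux_contr hγ1 (fun s => V s - vpi γ P r π s) ?_ s
    · linarith
    intro s M hM
    have h1 := vpi_fix γ hγ0 hγ1 P hP0 hP1 r π hπ s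
    have h2 : vpi γ P r π s = r s (g s) + γ * ∑ s', P s (g s) s' * vpi γ P r π s' := by
      rw [h1]; simp [π]
    have h3 := avg_le _ (hP0 s (g s)) (hP1 s (g s)) _ _ hM
    have h4 := hg s
    simp only [mul_sub, Finset.sum_sub_distrib] at h3
    show V s - vpi γ P r π s ≤ γ * M
    nlinarith [mul_le_mul_of_nonneg_left h3 hγ0]
  funext s
  haveI : Nonempty {π : S → A → ℝ // IsPolicy π} := ⟨⟨π, hπ⟩⟩
  refine le_antisymm (ciSup_le fun p => hub p.1 p.2 s) ((hlb s).trans ?_)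
  exact le_ciSup (f := fun p : {π : S → A → ℝ // IsPolicy π} => vpi γ P r p.1 s)
    ⟨V s, by rintro _ ⟨p, rfl⟩; exact hub p.1 p.2 s⟩ ⟨π, hπ⟩

/-- approximation error of the linearly relaxed approximate LP. -/
theorem lralp_value_close
    {S A : Type} [Fintype S] [Fintype A] [DecidableEq S] [Nonempty S] [Nonempty A]
    {d m : ℕ} (γ : ℝ) (hγ0 : 0 ≤ γ) (hγ1 : γ < 1)
    (P : S → A → S → ℝ) (hP0 : ∀ s a s', 0 ≤ P s a s')
    (hP1 : ∀ s a, ∑ s', P s a s' = 1)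
    (r : S → A → ℝ)
    (Φ : S → Fin d → ℝ) (hfeat : ∃ η : Fin d → ℝ, ∀ s, phiDot Φ η s = 1)
    (c : Fin m → S) (hc : Function.Injective c)
    (hcore : ∃ Z : S → Fin m → ℝ, (∀ s i, 0 ≤ Z s i) ∧
      ∀ s j, Φ s j = ∑ i, Z s i * Φ (c i) j)
    (μ : S → ℝ) (hμ : ∀ s, 0 ≤ μ s) :
    |VLRALP γ P r Φ c μ - ∑ s, μ s * vstar γ P r s| ≤
      10 * (∑ s, |μ s|) * epsApprox Φ (vstar γ P r) / (1 - γ) := by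
  obtain ⟨hB1, hB2⟩ := vstar_bellman γ hγ0 hγ1 P hP0 hP1 r
  set v := vstar γ P r with hv
  obtain ⟨η, hη⟩ := hfeat
  obtain ⟨Z, hZ0, hZ⟩ := hcore
  have hγ : 0 < 1 - γ := by linarith
  have hμabs : ∑ s, |μ s| = ∑ s, μ s := Finset.sum_congr rfl fun s _ => abs_of_nonneg (hμ s)
  rw [hμabs]
  have hμs : 0 ≤ ∑ s, μ s := Finset.sum_nonneg fun s _ => hμ s
  have hZd : ∀ θ s, phiDot Φ θ s = ∑ i, Z s i * phiDot Φ θ (c i) := by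
    intro θ s
    simp only [phiDot]
    calc ∑ j, Φ s j * θ j = ∑ j, ∑ i, Z s i * (Φ (c i) j * θ j) := by
          refine Finset.sum_congr rfl fun j _ => ?_
          rw [hZ s j, Finset.sum_mul]
          exact Finset.sum_congr rfl fun i _ => by ring
      _ = _ := by
          rw [Finset.sum_comm]
          exact Finset.sum_congr rfl fun i _ => by rw [Finset.mul_sum]
  have hZ1 : ∀ s, ∑ i, Z s i = 1 := by
    intro s
    have := hZd η s
    simpa [hη] using this.symm
  haveI : Nonempty (Fin m) := by
    by_contra hne
    rw [not_nonempty_iff] at hne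
    have := hZ1 (Classical.arbitrary S)
    simp at this
  have main : ∀ θ0 : Fin d → ℝ, |VLRALP γ P r Φ c μ - ∑ s, μ s * v s| ≤
      (10 * (∑ s, μ s) / (1 - γ)) * ⨆ s : S, |v s - phiDot Φ θ0 s| := by
    intro θ0
    set ε := ⨆ s : S, |v s - phiDot Φ θ0 s| with hε
    have hle : ∀ s, |v s - phiDot Φ θ0 s| ≤ ε := fun s =>
      le_ciSup (f := fun s => |v s - phiDot Φ θ0 s|) (Set.finite_range _).bddAbove s
    have hl1 : ∀ s, v s - phiDot Φ θ0 s ≤ ε := fun s => (abs_le.1 (hle s)).2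
    have hl2 : ∀ s, -ε ≤ v s - phiDot Φ θ0 s := fun s => (abs_le.1 (hle s)).1
    have hε0 : 0 ≤ ε := (abs_nonneg _).trans (hle (Classical.arbitrary S))
    obtain ⟨k, hk⟩ : ∃ k, k = 2 * ε / (1 - γ) := ⟨_, rfl⟩
    have hk' : k * (1 - γ) = 2 * ε := by rw [hk]; field_simp
    have hk0 : 0 ≤ k := by rw [hk]; positivity
    have hεk : ε ≤ k := by nlinarith
    have hshift : ∀ s, phiDot Φ (θ0 + k • η) s = phiDot Φ θ0 s + k := by
      intro s
      have : phiDot Φ (θ0 + k • η) s = phiDot Φ θ0 s + k * phiDot Φ η s := by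
        simp only [phiDot, Pi.add_apply, Pi.smul_apply, smul_eq_mul, Finset.mul_sum,
          ← Finset.sum_add_distrib]
        exact Finset.sum_congr rfl fun j _ => by ring
      rw [this, hη, mul_one]
    have hfeas : LRALPFeasible γ P r Φ c (θ0 + k • η) := by
      intro i a
      have h1 : ∑ s', P (c i) a s' * (phiDot Φ (θ0 + k • η) s' - v s') ≤ ε + k :=
        avg_le _ (hP0 _ a) (hP1 _ a) _ _ fun t => by
          rw [hshift]; linarith [hl2 t]
      simp only [mul_sub, Finset.sum_sub_distrib] at h1
      have h2 := hB1 (c i) a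
      have h3 := hl1 (c i)
      rw [hshift (c i)]
      nlinarith [mul_le_mul_of_nonneg_left h1 hγ0]
    have hlow : ∀ θ, LRALPFeasible γ P r Φ c θ → ∀ s, v s - (ε + k) ≤ phiDot Φ θ s := by
      intro θ hθ
      obtain ⟨i, hi⟩ := Finite.exists_min fun i => phiDot Φ θ (c i) - phiDot Φ θ0 (c i)
      have hw : ∀ s, phiDot Φ θ (c i) - phiDot Φ θ0 (c i) ≤ phiDot Φ θ s - phiDot Φ θ0 s := by
        intro s
        have := le_avg _ (hZ0 s) (hZ1 s) _ _ hi
        simp only [mul_sub, Finset.sum_sub_distrib] at this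
        rwa [← hZd, ← hZd] at this
      obtain ⟨w, hwd⟩ : ∃ w, w = phiDot Φ θ (c i) - phiDot Φ θ0 (c i) := ⟨_, rfl⟩
      rw [← hwd] at hw
      obtain ⟨a, ha⟩ := hB2 (c i)
      have h1 : w - ε ≤ ∑ s', P (c i) a s' * (phiDot Φ θ s' - v s') :=
        le_avg _ (hP0 _ a) (hP1 _ a) _ _ fun t => by linarith [hw t, hl1 t]
      simp only [mul_sub, Finset.sum_sub_distrib] at h1
      have h2 := hθ i a
      have h3 := hl2 (c i)
      have h4 : -(2 * ε) ≤ w * (1 - γ) := by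
        nlinarith [mul_le_mul_of_nonneg_left h1 hγ0]
      have h5 : -k ≤ w := by
        by_contra hcon
        push Not at hcon
        nlinarith
      intro s
      linarith [hw s, hl1 s]
    have hmem : ∑ s, μ s * phiDot Φ (θ0 + k • η) s ∈ {x : ℝ | ∃ θ : Fin d → ℝ,
        LRALPFeasible γ P r Φ c θ ∧ x = ∑ s, μ s * phiDot Φ θ s} := ⟨_, hfeas, rfl⟩
    have hlb : ∀ x ∈ {x : ℝ | ∃ θ : Fin d → ℝ,
        LRALPFeasible γ P r Φ c θ ∧ x = ∑ s, μ s * phiDot Φ θ s},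
        ∑ s, μ s * v s - (∑ s, μ s) * (ε + k) ≤ x := by
      rintro x ⟨θ, hθ, rfl⟩
      rw [Finset.sum_mul, ← Finset.sum_sub_distrib]
      refine Finset.sum_le_sum fun s _ => ?_
      nlinarith [mul_le_mul_of_nonneg_left (hlow θ hθ s) (hμ s)]
    have hL : ∑ s, μ s * v s - (∑ s, μ s) * (ε + k) ≤ VLRALP γ P r Φ c μ :=
      le_csInf ⟨_, hmem⟩ hlb
    have hU : VLRALP γ P r Φ c μ ≤ ∑ s, μ s * v s + (∑ s, μ s) * (ε + k) := by
      refine (csInf_le ⟨_, hlb⟩ hmem).trans ?_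
      rw [Finset.sum_mul, ← Finset.sum_add_distrib]
      refine Finset.sum_le_sum fun s _ => ?_
      rw [hshift]
      nlinarith [mul_le_mul_of_nonneg_left (hl2 s) (hμ s)]
    have hfin : (∑ s, μ s) * (ε + k) ≤ (10 * (∑ s, μ s) / (1 - γ)) * ε := by
      have : (10 * (∑ s, μ s) / (1 - γ)) * ε = (∑ s, μ s) * (5 * k) := by
        rw [hk]; field_simp; ring
      rw [this]
      exact mul_le_mul_of_nonneg_left (by linarith) hμs
    rw [abs_le]
    constructor <;> linarith
  have heq : 10 * (∑ s, μ s) * epsApprox Φ v / (1 - γ)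
      = ⨅ θ : Fin d → ℝ, (10 * (∑ s, μ s) / (1 - γ)) * ⨆ s : S, |v s - phiDot Φ θ s| := by
    rw [← Real.mul_iInf_of_nonneg (by positivity)]
    unfold epsApprox
    ring
  rw [heq]
  exact le_ciInf main

end MDPPlan
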